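/- Let v = Σ_{l=0}^{3} v^l be a graded form on ℝ³ with components in H¹_loc which is a weak solution of P(γ,μ,ω)v = 0 on ℝ³. Then for every form φ = φ⁰ + φ³ with smooth compactly supported components, ∫[⟨δ(v⁰+v³), δφ⟩ + ⟨d(v⁰+v³), dφ⟩ − ω²ε₀μ₀⟨v⁰+v³, φ⟩]dx + ⟨q̃(γ,μ,ω)(v⁰+v³), φ⟩ = 0, where ⟨q̃(γ,μ,ω)(v⁰+v³), φ⟩ := −∫ω²(γμ−ε₀μ₀)⟨v⁰+v³, φ⟩dx + ∫[⟨db,db⟩⟨v⁰,φ⁰⟩ + ⟨da,da⟩⟨v³,φ³⟩ + ⟨db, d⟨v⁰,φ⁰⟩⟩ + ⟨da, d⟨v³,φ³⟩⟩]dx, the derivatives of v⁰, v³ and of the products v⁰φ⁰, v³φ³ being weak derivatives. -/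

import Mathlib

noncomputable section

open MeasureTheory Finset

namespace EMPaper

abbrev Pt (n : ℕ) := Fin n → ℝ
abbrev GF (n : ℕ) := Finset (Fin n) → ℂ
abbrev Form (n : ℕ) := Pt n → GF n

variable {n : ℕ}

def msgn (I J : Finset (Fin n)) : ℂ :=
  (-1 : ℂ) ^ (((I ×ˢ J).filter fun p => p.2 < p.1).card)

def wedge (u v : GF n) : GF n := fun S =>
  ∑ I ∈ S.powerset, msgn I (S \ I) * u I * v (S \ I)

def vee (v u : GF n) : GF n := fun I =>
  ∑ J ∈ (univ \ I).powerset, msgn I J * v J * u (I ∪ J)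

def ginner (u v : GF n) : ℂ := ∑ S : Finset (Fin n), u S * v S

def gconj (u : GF n) : GF n := fun S => (starRingEnd ℂ) (u S)

def proj (l : ℕ) (u : GF n) : GF n := fun S => if S.card = l then u S else 0

def IsGrade (l : ℕ) (u : GF n) : Prop := ∀ S : Finset (Fin n), S.card ≠ l → u S = 0

def dxe (j : Fin n) : GF n := fun S => if S = {j} then 1 else 0

def oneG (c : Fin n → ℂ) : GF n := fun S => ∑ j, if S = {j} then c j else 0

def altSign (u : GF n) : GF n := fun S => (-1 : ℂ) ^ S.card * u S

def gd (D : Fin n → GF n) : GF n := fun S => ∑ j, wedge (dxe j) (D j) S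

def gdel (D : Fin n → GF n) : GF n := fun S =>
  (-1 : ℂ) ^ (S.card + 1) * ∑ j, vee (dxe j) (D j) S

def pd (j : Fin n) (f : Pt n → ℂ) : Pt n → ℂ := fun x => fderiv ℝ f x (Pi.single j 1)

def Dcl (φ : Form n) : Fin n → Form n := fun j x S => pd j (fun y => φ y S) x

def IsTest (φ : Pt n → ℂ) : Prop := ContDiff ℝ (⊤ : ℕ∞) φ ∧ HasCompactSupport φ

def TestForm (φ : Form n) : Prop := ∀ S : Finset (Fin n), IsTest fun x => φ x S

def L2loc (f : Pt n → ℂ) : Prop :=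
  AEStronglyMeasurable f (volume : Measure (Pt n)) ∧
    ∀ K : Set (Pt n), IsCompact K → IntegrableOn (fun x => ‖f x‖ ^ 2) K volume

def HasWeakPD (j : Fin n) (f g : Pt n → ℂ) : Prop :=
  ∀ φ : Pt n → ℂ, IsTest φ → ∫ x, g x * φ x = -∫ x, f x * pd j φ x

def H1locWith (w : Form n) (Dw : Fin n → Form n) : Prop :=
  (∀ S : Finset (Fin n), L2loc fun x => w x S) ∧
    (∀ (j : Fin n) (S : Finset (Fin n)),
      HasWeakPD j (fun x => w x S) fun x => Dw j x S) ∧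
    ∀ (j : Fin n) (S : Finset (Fin n)), L2loc fun x => Dw j x S

/-! The three-dimensional electromagnetic setting. -/

/-- The data of the medium: frequency `ω`, constants `ε₀, μ₀` and `C¹` coefficients
`ε, σ, μ` with `ε ≥ ε₀ > 0`, `μ ≥ μ₀ > 0`, `σ ≥ 0`. -/
structure Coeffs where
  ω : ℝ
  ε₀ : ℝ
  μ₀ : ℝ
  εf : Pt 3 → ℝ
  σf : Pt 3 → ℝ
  μf : Pt 3 → ℝ
  hω : 0 < ω
  hε₀ : 0 < ε₀
  hμ₀ : 0 < μ₀
  hεC1 : ContDiff ℝ 1 εf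
  hσC1 : ContDiff ℝ 1 σf
  hμC1 : ContDiff ℝ 1 μf
  hεge : ∀ x, ε₀ ≤ εf x
  hμge : ∀ x, μ₀ ≤ μf x
  hσge : ∀ x, 0 ≤ σf x

namespace Coeffs

variable (C : Coeffs)

/-- `γ = ε + iσ/ω`. -/
def γ : Pt 3 → ℂ := fun x => (C.εf x : ℂ) + Complex.I * (C.σf x : ℂ) / (C.ω : ℂ)

/-- `a = (1/2) Log γ`. -/
def a : Pt 3 → ℂ := fun x => (1 / 2 : ℂ) * Complex.log (C.γ x)

/-- `b = (1/2) Log μ`. -/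
def b : Pt 3 → ℂ := fun x => (1 / 2 : ℂ) * Complex.log ((C.μf x : ℂ))

/-- `γ^{1/2} = e^a`. -/
def sg : Pt 3 → ℂ := fun x => Complex.exp (C.a x)

/-- `μ^{1/2} = e^b`. -/
def sm : Pt 3 → ℂ := fun x => Complex.exp (C.b x)

/-- The one-form `da`. -/
def da : Form 3 := fun x => oneG fun j => pd j C.a x

/-- The one-form `db`. -/
def db : Form 3 := fun x => oneG fun j => pd j C.b x

/-- The one-form `d(γ^{1/2} μ^{1/2})`. -/
def dsgm : Form 3 := fun x => oneG fun j => pd j (fun y => C.sg y * C.sm y) x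

/-- The zeroth order coefficient `iω γ^{1/2} μ^{1/2}`. -/
def c0 : Pt 3 → ℂ := fun x => Complex.I * (C.ω : ℂ) * C.sg x * C.sm x

end Coeffs

/-- The zeroth order part of `P(γ,μ,ω)` at a point, given the values `A = da`, `B = db`
and `c = iωγ^{1/2}μ^{1/2}` there:
`da∧v¹ + da∨(v¹+v³) + db∧(v⁰+v²) − db∨v² + iωγ^{1/2}μ^{1/2} v`. -/
def P0 (A B : GF 3) (c : ℂ) (v : GF 3) : GF 3 :=
  wedge A (proj 1 v) + vee A (proj 1 v + proj 3 v) + wedge B (proj 0 v + proj 2 v)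
    - vee B (proj 2 v) + c • v

/-- The zeroth order part of `P(γ,μ,ω)^t` at a point:
`db∧v¹ + db∨(v¹+v³) + da∧(v⁰+v²) − da∨v² + iωγ^{1/2}μ^{1/2} v`. -/
def P0t (A B : GF 3) (c : ℂ) (v : GF 3) : GF 3 :=
  wedge B (proj 1 v) + vee B (proj 1 v + proj 3 v) + wedge A (proj 0 v + proj 2 v)
    - vee A (proj 2 v) + c • v

/-- `P(γ,μ,ω)v` at a point, computed from the partial derivatives `D j = ∂_j v`. -/
def Pfull (A B : GF 3) (c : ℂ) (D : Fin 3 → GF 3) (v : GF 3) : GF 3 :=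
  (gd fun j => altSign (D j)) + (gdel fun j => altSign (D j)) + P0 A B c v

/-- `P(γ,μ,ω)^t v` at a point, computed from the partial derivatives `D j = ∂_j v`. -/
def Ptfull (A B : GF 3) (c : ℂ) (D : Fin 3 → GF 3) (v : GF 3) : GF 3 :=
  -((gd fun j => altSign (D j)) + (gdel fun j => altSign (D j))) + P0t A B c v

/-- `v` is a weak solution of `P(γ,μ,ω)v = 0` on `ℝ³`. -/
def IsWeakSolP (C : Coeffs) (v : Form 3) : Prop :=
  ∀ φ : Form 3, TestForm φ →
    (∫ x, ginner (altSign (v x))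
        ((gd fun j => Dcl φ j x) + gdel fun j => Dcl φ j x))
      + (∫ x, ginner (P0 (C.da x) (C.db x) (C.c0 x) (v x)) (φ x)) = 0

/-- `v` is a weak solution of `P(γ,μ,ω)^t v = 0` on `ℝ³`. -/
def IsWeakSolPt (C : Coeffs) (v : Form 3) : Prop :=
  ∀ φ : Form 3, TestForm φ →
    (∫ x, ginner (-altSign (v x))
        ((gd fun j => Dcl φ j x) + gdel fun j => Dcl φ j x))
      + (∫ x, ginner (P0t (C.da x) (C.db x) (C.c0 x) (v x)) (φ x)) = 0

/-- The components of the Hodge star of the 2-form part: `∗(dx²∧dx³) = dx¹`,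
`∗(dx³∧dx¹) = dx²`, `∗(dx¹∧dx²) = dx³`. -/
def star2 (u : GF 3) : Fin 3 → ℂ := fun k =>
  if k = 0 then u {1, 2} else if k = 1 then -u {0, 2} else u {0, 1}

/-- `⟨c, D*(u⊙v)⟩` for 1-forms with components `u, v` and partial derivatives
`du j k = ∂_j u_k`, `dv j k = ∂_j v_k`, where
`D*(u⊙v) = −Σ_k (Σ_j ∂_j(u_j v_k + u_k v_j)) dx^k`. -/
def dstarPair (c u v : Fin 3 → ℂ) (du dv : Fin 3 → Fin 3 → ℂ) : ℂ :=
  ∑ k, c k * (-(∑ j, (du j j * v k + u j * dv j k + du j k * v j + u k * dv j j)))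

/-- The pairing `⟨Q(γ,μ,ω)w, φ⟩`, where `Dw` is the family of weak partial derivatives
of `w` and `φ` is a smooth compactly supported graded form.  The weak derivatives of the
scalar products and of the symmetric tensor products appearing in `Q` are expanded by
the Leibniz rule. -/
def Qpair (C : Coeffs) (w : Form 3) (Dw : Fin 3 → Form 3) (φ : Form 3) : ℂ :=
  -(∫ x, (C.ω : ℂ) ^ 2 * (C.γ x * (C.μf x : ℂ) - ((C.ε₀ * C.μ₀ : ℝ) : ℂ))
      * ginner (w x) (φ x))
  + (∫ x, ginner ((2 * Complex.I * (C.ω : ℂ)) •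
      (vee (C.dsgm x) (proj 1 (w x) + proj 3 (w x))
        + wedge (C.dsgm x) (proj 0 (w x) + proj 2 (w x)))) (φ x))
  + (∫ x, ginner (C.da x) (C.da x)
        * ginner (proj 0 (w x) + proj 2 (w x)) (proj 0 (φ x) + proj 2 (φ x))
      + ginner (C.db x) (C.db x)
        * ginner (proj 1 (w x) + proj 3 (w x)) (proj 1 (φ x) + proj 3 (φ x)))
  + (∫ x,
      (∑ j, pd j C.a x *
        (ginner (proj 2 (Dw j x) - proj 0 (Dw j x)) (proj 0 (φ x) + proj 2 (φ x))
          + ginner (proj 2 (w x) - proj 0 (w x)) (proj 0 (Dcl φ j x) + proj 2 (Dcl φ j x))))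
      + ∑ j, pd j C.b x *
        (ginner (proj 1 (Dw j x) - proj 3 (Dw j x)) (proj 1 (φ x) + proj 3 (φ x))
          + ginner (proj 1 (w x) - proj 3 (w x)) (proj 1 (Dcl φ j x) + proj 3 (Dcl φ j x))))
  + (∫ x, dstarPair (fun k => pd k C.b x) (fun j => w x {j}) (fun j => φ x {j})
      (fun j k => Dw j x {k}) (fun j k => Dcl φ j x {k}))
  + (∫ x, dstarPair (fun k => pd k C.a x) (star2 (w x)) (star2 (φ x))
      (fun j k => star2 (Dw j x) k) (fun j k => star2 (Dcl φ j x) k))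

/-- The pairing `⟨Q̃(γ,μ,ω)w, φ⟩`. -/
def Qtpair (C : Coeffs) (w : Form 3) (Dw : Fin 3 → Form 3) (φ : Form 3) : ℂ :=
  -(∫ x, (C.ω : ℂ) ^ 2 * (C.γ x * (C.μf x : ℂ) - ((C.ε₀ * C.μ₀ : ℝ) : ℂ))
      * ginner (w x) (φ x))
  + (∫ x, ginner ((-(2 * Complex.I * (C.ω : ℂ))) • vee (C.dsgm x) (proj 2 (w x))
      + (2 * Complex.I * (C.ω : ℂ)) • wedge (C.dsgm x) (proj 1 (w x))) (φ x))
  + (∫ x, ginner (C.db x) (C.db x)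
        * ginner (proj 0 (w x) + proj 2 (w x)) (proj 0 (φ x) + proj 2 (φ x))
      + ginner (C.da x) (C.da x)
        * ginner (proj 1 (w x) + proj 3 (w x)) (proj 1 (φ x) + proj 3 (φ x)))
  + (∫ x,
      (∑ j, pd j C.b x *
        (ginner (proj 0 (Dw j x) - proj 2 (Dw j x)) (proj 0 (φ x) + proj 2 (φ x))
          + ginner (proj 0 (w x) - proj 2 (w x)) (proj 0 (Dcl φ j x) + proj 2 (Dcl φ j x))))
      + ∑ j, pd j C.a x *
        (ginner (proj 3 (Dw j x) - proj 1 (Dw j x)) (proj 1 (φ x) + proj 3 (φ x))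
          + ginner (proj 3 (w x) - proj 1 (w x)) (proj 1 (Dcl φ j x) + proj 3 (Dcl φ j x))))
  - (∫ x, dstarPair (fun k => pd k C.a x) (fun j => w x {j}) (fun j => φ x {j})
      (fun j k => Dw j x {k}) (fun j k => Dcl φ j x {k}))
  - (∫ x, dstarPair (fun k => pd k C.b x) (star2 (w x)) (star2 (φ x))
      (fun j k => star2 (Dw j x) k) (fun j k => star2 (Dcl φ j x) k))

/-- The pairing `⟨q̃(γ,μ,ω)(v⁰+v³), φ⟩` for `φ = φ⁰ + φ³`, where `Dv` is the family of
weak partial derivatives of `v`. -/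
def qtPair (C : Coeffs) (v : Form 3) (Dv : Fin 3 → Form 3) (φ : Form 3) : ℂ :=
  -(∫ x, (C.ω : ℂ) ^ 2 * (C.γ x * (C.μf x : ℂ) - ((C.ε₀ * C.μ₀ : ℝ) : ℂ))
      * ginner (proj 0 (v x) + proj 3 (v x)) (φ x))
  + ∫ x, ginner (C.db x) (C.db x) * (v x ∅ * φ x ∅)
      + ginner (C.da x) (C.da x) * (v x univ * φ x univ)
      + (∑ j, pd j C.b x * (Dv j x ∅ * φ x ∅ + v x ∅ * Dcl φ j x ∅))
      + ∑ j, pd j C.a x * (Dv j x univ * φ x univ + v x univ * Dcl φ j x univ)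

/-!
A weak solution with locally integrable weak derivatives satisfies `Pv = 0` almost everywhere.
Read off in degrees, and with the two-form part `v²` replaced by the vector field `∗v²`, the
equation `Pv = 0` on `ℝ³` splits into two copies of one first order system
`div F + ⟨∇α, F⟩ + c f = 0`, `∇f + f ∇β + Div H - ⟨∇β, H⟩ + c F = 0` with `H` skew-symmetric and
`∇c = c (∇α + ∇β)`: one for `f = v⁰`, `F = v¹`, `(α, β) = (a, b)`, where `Div H` is the curl of
`∗v²`, and one for `f = v³`, `F = ∗v²`, `(α, β) = (b, a)`, where it is the curl of `-v¹`.

Pair the second equation with `∇φ + φ ∇β = e^{-β} ∇(e^β φ)`. After conjugation by `e^β` the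
contribution of `H` is a weak double divergence, which vanishes by skew-symmetry. In that of `F`,
integration by parts against `c φ` and the first equation leave `c² f φ`. As `c² = -ω²γμ`, this is
the Schrödinger equation for `f` with the potential `⟨∇β, ∇β⟩ - Δβ` in weak form.
-/

section Analysis

variable {f g ψ : Pt n → ℂ} {j k : Fin n}

/-- A `C¹` function with compact support.  It plays the role of a test function when the
coefficients multiplying a smooth one are only `C¹`. -/
def IsC1Test (ψ : Pt n → ℂ) : Prop := ContDiff ℝ 1 ψ ∧ HasCompactSupport ψ

/-- `g` is the weak `j`-th partial derivative of `f`, both being locally integrable: the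
one-variable ingredient of `W^{1,1}_loc`. -/
structure HasLocalWeakPD (j : Fin n) (f g : Pt n → ℂ) : Prop where
  locallyIntegrable : LocallyIntegrable f volume
  locallyIntegrable_pd : LocallyIntegrable g volume
  hasWeakPD : HasWeakPD j f g

lemma L2loc.locallyIntegrable (h : L2loc f) : LocallyIntegrable f volume := by
  refine locallyIntegrable_iff.2 fun K hK => ?_
  have hsq : IntegrableOn (fun x => 1 + ‖f x‖ ^ 2) K volume :=
    (integrableOn_const hK.measure_lt_top.ne).add (h.2 K hK)
  refine hsq.mono' h.1.restrict (.of_forall fun x => ?_)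
  nlinarith [sq_nonneg (‖f x‖ - 1), norm_nonneg (f x)]

lemma H1locWith.hasLocalWeakPD {w : Form n} {Dw : Fin n → Form n} (h : H1locWith w Dw)
    (j : Fin n) (S : Finset (Fin n)) :
    HasLocalWeakPD j (fun x => w x S) fun x => Dw j x S :=
  ⟨(h.1 S).locallyIntegrable, (h.2.2 j S).locallyIntegrable, h.2.1 j S⟩

lemma continuous_pd (h : ContDiff ℝ 1 f) (j : Fin n) : Continuous (pd j f) :=
  (h.continuous_fderiv one_ne_zero).clm_apply continuous_const

lemma hasCompactSupport_pd (h : HasCompactSupport f) (j : Fin n) : HasCompactSupport (pd j f) :=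
  h.fderiv_apply ℝ _

lemma pd_mul (hf : ContDiff ℝ 1 f) (hg : ContDiff ℝ 1 g) (j : Fin n) (x : Pt n) :
    pd j (fun y => f y * g y) x = pd j f x * g x + f x * pd j g x := by
  simp only [pd, fderiv_fun_mul (hf.differentiable one_ne_zero x)
    (hg.differentiable one_ne_zero x), add_apply, smul_apply, smul_eq_mul]
  ring

lemma pd_const (c : ℂ) (j : Fin n) (x : Pt n) : pd j (fun _ => c) x = 0 := by
  simp [pd]

lemma pd_cexp (hf : ContDiff ℝ 1 f) (j : Fin n) (x : Pt n) :
    pd j (fun y => Complex.exp (f y)) x = Complex.exp (f x) * pd j f x := by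
  simp [pd, (hf.differentiable one_ne_zero x).hasFDerivAt.cexp.fderiv]

lemma pd_comm (hf : ContDiff ℝ 2 f) (j k : Fin n) (x : Pt n) :
    pd j (pd k f) x = pd k (pd j f) x := by
  have hd : DifferentiableAt ℝ (fderiv ℝ f) x :=
    (hf.fderiv_right (m := 1) (by norm_num)).differentiable one_ne_zero x
  have pd_pd : ∀ i l : Fin n, pd i (pd l f) x
      = fderiv ℝ (fderiv ℝ f) x (Pi.single i 1) (Pi.single l 1) := fun i l => by
    unfold pd
    rw [fderiv_clm_apply hd (differentiableAt_const _)]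
    simp
  rw [pd_pd, pd_pd]
  exact hf.contDiffAt.isSymmSndFDerivAt (by simp) _ _

lemma IsTest.isC1Test (h : IsTest ψ) : IsC1Test ψ :=
  ⟨h.1.of_le (by exact_mod_cast le_top), h.2⟩

lemma isTest_pd (h : IsTest ψ) (j : Fin n) : IsTest (pd j ψ) :=
  ⟨(h.1.fderiv_right (m := (⊤ : ℕ∞)) (by simp)).clm_apply contDiff_const,
    hasCompactSupport_pd h.2 j⟩

lemma IsC1Test.mul_left {c : Pt n → ℂ} (h : IsC1Test ψ) (hc : ContDiff ℝ 1 c) :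
    IsC1Test fun x => c x * ψ x :=
  ⟨hc.mul h.1, h.2.mul_left⟩

lemma integrable_mul_of_hasCompactSupport (hf : LocallyIntegrable f volume) (hψ : Continuous ψ)
    (hψc : HasCompactSupport ψ) : Integrable (fun x => f x * ψ x) volume :=
  hf.integrable_smul_right_of_hasCompactSupport hψ hψc

lemma IsC1Test.integrable_mul (h : IsC1Test ψ) (hf : LocallyIntegrable f volume) :
    Integrable (fun x => f x * ψ x) volume :=
  integrable_mul_of_hasCompactSupport hf h.1.continuous h.2

lemma IsC1Test.integrable_mul_pd (h : IsC1Test ψ) (hf : LocallyIntegrable f volume) (j : Fin n) :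
    Integrable (fun x => f x * pd j ψ x) volume :=
  integrable_mul_of_hasCompactSupport hf (continuous_pd h.1 j) (hasCompactSupport_pd h.2 j)

lemma locallyIntegrable_mul_left {c : Pt n → ℂ} (hc : Continuous c)
    (hf : LocallyIntegrable f volume) : LocallyIntegrable (fun x => c x * f x) volume :=
  locallyIntegrable_iff.2 fun _ hK =>
    (hf.integrableOn_isCompact hK).continuousOn_mul hc.continuousOn hK

lemma IsC1Test.integrable_mul_mul {c : Pt n → ℂ} (h : IsC1Test ψ) (hc : Continuous c)
    (hf : LocallyIntegrable f volume) : Integrable (fun x => c x * (f x * ψ x)) volume := by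
  simpa only [mul_assoc] using h.integrable_mul (locallyIntegrable_mul_left hc hf)

lemma IsC1Test.integrable_mul_mul_pd {c : Pt n → ℂ} (h : IsC1Test ψ) (hc : Continuous c)
    (hf : LocallyIntegrable f volume) (j : Fin n) :
    Integrable (fun x => c x * (f x * pd j ψ x)) volume := by
  simpa only [mul_assoc] using h.integrable_mul_pd (locallyIntegrable_mul_left hc hf) j

/-- The bump functions at the origin, of radius `1 / (m + 1)`, used as mollifying kernels. -/
def mollifier (m : ℕ) : ContDiffBump (0 : Pt n) where
  rIn := 1 / (m + 2)
  rOut := 1 / (m + 1)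
  rIn_pos := by positivity
  rIn_lt_rOut := one_div_lt_one_div_of_lt (by positivity) (by linarith)

open scoped Convolution in
/-- The `m`-th mollification of `h`. -/
def mollify (m : ℕ) (h : Pt n → ℂ) : Pt n → ℂ :=
  (mollifier m).normed volume ⋆[ContinuousLinearMap.lsmul ℝ ℝ, volume] h

lemma isTest_mollify (hψ : Continuous ψ) (hψc : HasCompactSupport ψ) (m : ℕ) :
    IsTest (mollify m ψ) :=
  ⟨(mollifier m).hasCompactSupport_normed.contDiff_convolution_left _
      (mollifier m).contDiff_normed hψ.locallyIntegrable,
    (mollifier m).hasCompactSupport_normed.convolution _ hψc⟩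

lemma pd_mollify (h : IsC1Test ψ) (m : ℕ) (j : Fin n) :
    pd j (mollify m ψ) = mollify m (pd j ψ) := by
  have hη : LocallyIntegrable ((mollifier (n := n) m).normed volume) volume :=
    ((mollifier m).contDiff_normed (n := 0)).continuous.locallyIntegrable
  funext x
  simp only [pd, mollify, (h.2.hasFDerivAt_convolution_right _ hη h.1 x).fderiv]
  exact convolution_precompR_apply _ hη (h.2.fderiv ℝ) (h.1.continuous_fderiv one_ne_zero) x _

lemma norm_mollify_le {M : ℝ} (hψ : Continuous ψ) {x : Pt n} (m : ℕ)
    (hM : ∀ y ∈ Metric.closedBall x 1, ‖ψ y‖ ≤ M) : ‖mollify m ψ x‖ ≤ M := by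
  have hM0 : 0 ≤ M := (norm_nonneg _).trans (hM x (by simp))
  have hball : Metric.ball x (mollifier (n := n) m).rOut ⊆ Metric.closedBall x 1 :=
    Metric.ball_subset_closedBall.trans <| Metric.closedBall_subset_closedBall <|
      div_le_one_of_le₀ (by simp) (by positivity)
  rw [← dist_zero_right]
  exact dist_convolution_le hM0 (mollifier m).support_normed_eq.subset
    (mollifier m).nonneg_normed (mollifier m).integral_normed hψ.aestronglyMeasurable
    fun y hy => (dist_zero_right _).trans_le (hM y (hball hy))

open Filter Topology in
lemma tendsto_mollify (hψ : Continuous ψ) (x : Pt n) :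
    Tendsto (fun m => mollify m ψ x) atTop (𝓝 (ψ x)) :=
  ContDiffBump.convolution_tendsto_right_of_continuous tendsto_one_div_add_atTop_nhds_zero_nat hψ x

open Filter Topology in
lemma tendsto_integral_mul_mollify (hf : LocallyIntegrable f volume) (hψ : Continuous ψ)
    (hψc : HasCompactSupport ψ) :
    Tendsto (fun m => ∫ x, f x * mollify m ψ x) atTop (𝓝 (∫ x, f x * ψ x)) := by
  obtain ⟨M, hM⟩ := hψc.exists_bound_of_continuous hψ
  set K := Metric.cthickening 1 (tsupport ψ)
  have hK : IsCompact K := IsCompact.cthickening hψc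
  have mollify_eq_zero : ∀ m, ∀ x ∉ K, ‖mollify m ψ x‖ ≤ 0 := fun m x hx =>
    norm_mollify_le hψ m fun y hy => norm_le_zero_iff.2 <| of_not_not fun hne =>
      hx (Metric.mem_cthickening_of_dist_le x y 1 _ (subset_tsupport _ hne)
        (by simpa [dist_comm] using hy))
  refine tendsto_integral_of_dominated_convergence (K.indicator fun x => ‖f x‖ * M)
    (fun m => hf.aestronglyMeasurable.mul
      (isTest_mollify hψ hψc m).1.continuous.aestronglyMeasurable)
    ((integrable_indicator_iff hK.measurableSet).2
      ((hf.integrableOn_isCompact hK).norm.mul_const M))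
    (fun m => .of_forall fun x => ?_)
    (.of_forall fun x => (tendsto_mollify hψ x).const_mul _)
  by_cases hx : x ∈ K
  · rw [Set.indicator_of_mem hx, norm_mul]
    exact mul_le_mul_of_nonneg_left (norm_mollify_le hψ m fun y _ => hM y) (norm_nonneg _)
  · simp [Set.indicator_of_notMem hx, norm_le_zero_iff.1 (mollify_eq_zero m x hx)]

namespace HasLocalWeakPD

lemma integral_mul_eq (h : HasLocalWeakPD j f g) (hψ : IsC1Test ψ) :
    ∫ x, g x * ψ x = -∫ x, f x * pd j ψ x := by
  refine tendsto_nhds_unique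
    (tendsto_integral_mul_mollify h.locallyIntegrable_pd hψ.1.continuous hψ.2)
    ((tendsto_integral_mul_mollify h.locallyIntegrable (continuous_pd hψ.1 j)
      (hasCompactSupport_pd hψ.2 j)).neg.congr fun m => ?_)
  rw [h.hasWeakPD _ (isTest_mollify hψ.1.continuous hψ.2 m), pd_mollify hψ]

lemma mul_left {c : Pt n → ℂ} (hc : ContDiff ℝ 1 c) (h : HasLocalWeakPD j f g) :
    HasLocalWeakPD j (fun x => c x * f x) fun x => c x * g x + pd j c x * f x where
  locallyIntegrable := locallyIntegrable_mul_left hc.continuous h.locallyIntegrable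
  locallyIntegrable_pd := (locallyIntegrable_mul_left hc.continuous h.locallyIntegrable_pd).add
    (locallyIntegrable_mul_left (continuous_pd hc j) h.locallyIntegrable)
  hasWeakPD φ hφ := by
    have hφ' := hφ.isC1Test
    have hcφ := hφ'.mul_left hc
    have hg := hcφ.integrable_mul h.locallyIntegrable_pd
    have hf := hφ'.integrable_mul
      (locallyIntegrable_mul_left (continuous_pd hc j) h.locallyIntegrable)
    have hf' := hφ'.integrable_mul_pd
      (locallyIntegrable_mul_left hc.continuous h.locallyIntegrable) j
    calc ∫ x, (c x * g x + pd j c x * f x) * φ x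
        = ∫ x, g x * (c x * φ x) + pd j c x * f x * φ x := by congr! 2; ring
      _ = -(∫ x, pd j c x * f x * φ x + c x * f x * pd j φ x)
            + ∫ x, pd j c x * f x * φ x := by
          rw [integral_add hg hf, h.integral_mul_eq hcφ]
          simp_rw [pd_mul hc hφ'.1]
          congr! 4
          ring
      _ = -∫ x, c x * f x * pd j φ x := by
          rw [integral_add hf hf']
          ring

lemma const_mul (c : ℂ) (h : HasLocalWeakPD j f g) :
    HasLocalWeakPD j (fun x => c * f x) fun x => c * g x := by
  simpa only [pd_const, zero_mul, add_zero] using h.mul_left (contDiff_const (c := c))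

/-- Both sides are `-∫ f ∂ⱼ∂ₖψ` when `ψ` is smooth; the `C¹` case follows by mollifying `ψ`. -/
lemma integral_mul_pd_comm {g' : Pt n → ℂ} (hj : HasLocalWeakPD j f g)
    (hk : HasLocalWeakPD k f g') (hψ : IsC1Test ψ) :
    ∫ x, g x * pd k ψ x = ∫ x, g' x * pd j ψ x := by
  have tendsto_pd : ∀ {h : Pt n → ℂ} (i : Fin n), LocallyIntegrable h volume → _ := fun i hh =>
    tendsto_integral_mul_mollify hh (continuous_pd hψ.1 i) (hasCompactSupport_pd hψ.2 i)
  refine tendsto_nhds_unique (tendsto_pd k hj.locallyIntegrable_pd)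
    ((tendsto_pd j hk.locallyIntegrable_pd).congr fun m => ?_)
  have ht := isTest_mollify hψ.1.continuous hψ.2 m
  have ht2 : ContDiff ℝ 2 (mollify m ψ) := mod_cast contDiff_infty.1 ht.1 2
  rw [← pd_mollify hψ, ← pd_mollify hψ, hj.hasWeakPD _ (isTest_pd ht k),
    hk.hasWeakPD _ (isTest_pd ht j)]
  simp_rw [pd_comm ht2 k j]

end HasLocalWeakPD

lemma integrable_weakDiv_mul {F DF : Fin n → Pt n → ℂ} (hF : ∀ k, HasLocalWeakPD k (F k) (DF k))
    (hψ : IsC1Test ψ) : Integrable (fun x => ∑ k, (DF k x * ψ x + F k x * pd k ψ x)) volume :=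
  integrable_finsetSum _ fun k _ => (hψ.integrable_mul (hF k).locallyIntegrable_pd).add
    (hψ.integrable_mul_pd (hF k).locallyIntegrable k)

lemma integral_weakDiv_mul {F DF : Fin n → Pt n → ℂ} (hF : ∀ k, HasLocalWeakPD k (F k) (DF k))
    (hψ : IsC1Test ψ) : ∫ x, ∑ k, (DF k x * ψ x + F k x * pd k ψ x) = 0 := by
  have hd := fun k => hψ.integrable_mul (hF k).locallyIntegrable_pd
  have hp := fun k => hψ.integrable_mul_pd (hF k).locallyIntegrable k
  have hint : ∀ k ∈ univ, Integrable (fun x => DF k x * ψ x + F k x * pd k ψ x) volume :=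
    fun k _ => (hd k).add (hp k)
  rw [integral_finsetSum _ hint]
  refine sum_eq_zero fun k _ => ?_
  rw [integral_add (hd k) (hp k), (hF k).integral_mul_eq hψ, neg_add_cancel]

lemma integrable_weakDivDiv_mul {F DF : Fin n → Fin n → Pt n → ℂ}
    (hF : ∀ j k, HasLocalWeakPD j (F j k) (DF j k)) (hψ : IsC1Test ψ) :
    Integrable (fun x => ∑ k, ∑ j, DF j k x * pd k ψ x) volume :=
  integrable_finsetSum _ fun k _ => integrable_finsetSum _ fun j _ =>
    hψ.integrable_mul_pd (hF j k).locallyIntegrable_pd k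

/-- The weak form of `δδ = 0` on two-forms. -/
lemma integral_weakDivDiv_mul_of_skew {F DF : Fin n → Fin n → Pt n → ℂ}
    (hF : ∀ j k, HasLocalWeakPD j (F j k) (DF j k)) (hskew : ∀ j k x, F j k x = -F k j x)
    (hψ : IsC1Test ψ) : ∫ x, ∑ k, ∑ j, DF j k x * pd k ψ x = 0 := by
  have hint := fun j k => hψ.integrable_mul_pd (hF j k).locallyIntegrable_pd k
  have hswap : ∀ j k, ∫ x, DF j k x * pd k ψ x = -∫ x, DF k j x * pd j ψ x := fun j k => by
    have hneg : HasLocalWeakPD k (F j k) fun x => -DF k j x := by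
      simpa only [neg_one_mul, ← hskew] using (hF k j).const_mul (-1)
    simp_rw [(hF j k).integral_mul_pd_comm hneg hψ, neg_mul, integral_neg]
  rw [integral_finsetSum _ fun k _ => integrable_finsetSum _ fun j _ => hint j k]
  simp_rw [integral_finsetSum _ fun j _ => hint j _]
  rw [← self_eq_neg]
  conv_lhs => rw [sum_comm]
  simp_rw [← sum_neg_distrib]
  exact sum_congr rfl fun j _ => sum_congr rfl fun k _ => hswap j k

lemma ae_add_weakDiv_eq_zero {F DF : Fin n → Pt n → ℂ} {Z : Pt n → ℂ}
    (hF : ∀ k, HasLocalWeakPD k (F k) (DF k)) (hZ : LocallyIntegrable Z volume)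
    (h : ∀ φ, IsTest φ → -(∫ x, ∑ k, F k x * pd k φ x) + ∫ x, Z x * φ x = 0) :
    ∀ᵐ x, Z x + ∑ k, DF k x = 0 := by
  have hdiv : LocallyIntegrable (fun x => ∑ k, DF k x) volume :=
    locallyIntegrable_finsetSum _ fun k _ => (hF k).locallyIntegrable_pd
  refine ae_eq_zero_of_integral_contDiff_smul_eq_zero (hZ.add hdiv) fun η hη hηc => ?_
  have hφ : IsTest fun x => (η x : ℂ) :=
    ⟨Complex.ofRealCLM.contDiff.comp hη, hηc.comp_left Complex.ofReal_zero⟩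
  have hd := hφ.isC1Test.integrable_mul hdiv
  have hp : Integrable (fun x => ∑ k, F k x * pd k (fun y => (η y : ℂ)) x) volume :=
    integrable_finsetSum _ fun k _ => hφ.isC1Test.integrable_mul_pd (hF k).locallyIntegrable k
  have hparts := integral_weakDiv_mul hF hφ.isC1Test
  simp_rw [sum_add_distrib, ← sum_mul] at hparts
  rw [integral_add hd hp] at hparts
  calc ∫ x, η x • (Z x + ∑ k, DF k x)
      = ∫ x, Z x * η x + (∑ k, DF k x) * η x := by
        congr! 2
        rw [Complex.real_smul]
        ring
    _ = 0 := by
        rw [integral_add (hφ.isC1Test.integrable_mul hZ) hd]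
        linear_combination h _ hφ + hparts

end Analysis

section TwistedSystem

variable {α β c f φ : Pt n → ℂ} {Df F DF : Fin n → Pt n → ℂ} {H DH : Fin n → Fin n → Pt n → ℂ}

/-- Conjugation by `exp β` turns the twisted derivatives `∂ - ∂β` of `H` and `∂ + ∂β` of `φ` into
plain ones. -/
lemma twisted_mul_twisted_eq (hβ : ContDiff ℝ 1 β) (hφ : IsC1Test φ) (j k : Fin n) (x : Pt n) :
    (DH j k x - pd j β x * H j k x) * (pd k φ x + φ x * pd k β x)
      = (Complex.exp (-β x) * DH j k x + pd j (fun y => Complex.exp (-β y)) x * H j k x)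
        * pd k (fun y => Complex.exp (β y) * φ y) x := by
  have hneg : pd j (fun y => -β y) x = -pd j β x := by simp [pd, fderiv_fun_neg]
  rw [pd_mul hβ.cexp hφ.1, pd_cexp hβ, pd_cexp hβ.neg, hneg, Complex.exp_neg]
  field_simp [Complex.exp_ne_zero]
  ring

lemma integrable_twistedDivDiv_mul (hβ : ContDiff ℝ 1 β)
    (hH : ∀ j k, HasLocalWeakPD j (H j k) (DH j k)) (hφ : IsC1Test φ) :
    Integrable (fun x => ∑ k, ∑ j,
      (DH j k x - pd j β x * H j k x) * (pd k φ x + φ x * pd k β x)) volume := by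
  simp_rw [twisted_mul_twisted_eq hβ hφ]
  exact integrable_weakDivDiv_mul (fun j k => (hH j k).mul_left hβ.neg.cexp) (hφ.mul_left hβ.cexp)

lemma integral_twistedDivDiv_mul_of_skew (hβ : ContDiff ℝ 1 β)
    (hH : ∀ j k, HasLocalWeakPD j (H j k) (DH j k)) (hskew : ∀ j k x, H j k x = -H k j x)
    (hφ : IsC1Test φ) :
    ∫ x, ∑ k, ∑ j, (DH j k x - pd j β x * H j k x) * (pd k φ x + φ x * pd k β x) = 0 := by
  simp_rw [twisted_mul_twisted_eq hβ hφ]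
  refine integral_weakDivDiv_mul_of_skew (fun j k => (hH j k).mul_left hβ.neg.cexp)
    (fun j k x => ?_) (hφ.mul_left hβ.cexp)
  rw [hskew j k x, mul_neg]

/-- Pair the gradient equation with `∂φ + φ ∂β` and the divergence equation with `c φ`: the
`H`-terms drop out by skew-symmetry, the `F`-terms because `∂c = c (∂α + ∂β)` makes them a
divergence. -/
theorem integral_twistedHelmholtz_eq_zero (hβ : ContDiff ℝ 1 β) (hc : ContDiff ℝ 1 c)
    (hcαβ : ∀ k x, pd k c x = c x * (pd k α x + pd k β x))
    (hF : ∀ k, HasLocalWeakPD k (F k) (DF k))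
    (hH : ∀ j k, HasLocalWeakPD j (H j k) (DH j k)) (hskew : ∀ j k x, H j k x = -H k j x)
    (hdiv : ∀ᵐ x, ∑ k, (DF k x + pd k α x * F k x) + c x * f x = 0)
    (hgrad : ∀ᵐ x, ∀ k, Df k x + f x * pd k β x
      + ∑ j, (DH j k x - pd j β x * H j k x) + c x * F k x = 0)
    (hφ : IsC1Test φ) :
    ∫ x, ∑ k, (Df k x + f x * pd k β x) * (pd k φ x + φ x * pd k β x)
      + c x ^ 2 * (f x * φ x) = 0 := by
  have hcφ := hφ.mul_left hc
  calc ∫ x, ∑ k, (Df k x + f x * pd k β x) * (pd k φ x + φ x * pd k β x) + c x ^ 2 * (f x * φ x)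
      = ∫ x, -((∑ k, ∑ j, (DH j k x - pd j β x * H j k x) * (pd k φ x + φ x * pd k β x))
          + ∑ k, (DF k x * (c x * φ x) + F k x * pd k (fun y => c y * φ y) x)) := by
        refine integral_congr_ae ?_
        filter_upwards [hdiv, hgrad] with x hdivx hgradx
        have hk : ∀ k, (Df k x + f x * pd k β x) * (pd k φ x + φ x * pd k β x)
            = -((∑ j, (DH j k x - pd j β x * H j k x) * (pd k φ x + φ x * pd k β x))
              + (DF k x * (c x * φ x) + F k x * pd k (fun y => c y * φ y) x))
              + c x * φ x * (DF k x + pd k α x * F k x) := fun k => by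
          rw [pd_mul hc hφ.1, hcαβ, ← sum_mul]
          linear_combination (pd k φ x + φ x * pd k β x) * hgradx k
        simp_rw [hk, sum_add_distrib, sum_neg_distrib, sum_add_distrib, ← mul_sum]
        linear_combination c x * φ x * hdivx
    _ = 0 := by
        rw [integral_neg, integral_add (integrable_twistedDivDiv_mul hβ hH hφ)
          (integrable_weakDiv_mul hF hcφ), integral_twistedDivDiv_mul_of_skew hβ hH hskew hφ,
          integral_weakDiv_mul hF hcφ, add_zero, neg_zero]

/-- The density of the weak pairing of `(-Δ - κ) f` with `φ`, where `Df` is the weak gradient of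
`f`. -/
def helmholtzDensity (κ : ℂ) (f : Pt n → ℂ) (Df : Fin n → Pt n → ℂ) (φ : Pt n → ℂ) : Pt n → ℂ :=
  fun x => ∑ k, Df k x * pd k φ x - κ * (f x * φ x)

/-- The density of the weak pairing of `(⟨∇β, ∇β⟩ - Δβ) f` with `φ`, where `Df` is the weak gradient
of `f`; one derivative of `β` is moved onto `f φ` because `β` is only `C¹`. -/
def potentialDensity (β f : Pt n → ℂ) (Df : Fin n → Pt n → ℂ) (φ : Pt n → ℂ) : Pt n → ℂ :=
  fun x => (∑ k, pd k β x * pd k β x) * (f x * φ x)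
    + ∑ k, pd k β x * (Df k x * φ x + f x * pd k φ x)

lemma integrable_helmholtzDensity (κ : ℂ) (hf : ∀ k, HasLocalWeakPD k f (Df k))
    (hf0 : LocallyIntegrable f volume) (hφ : IsC1Test φ) :
    Integrable (helmholtzDensity κ f Df φ) volume :=
  (integrable_finsetSum _ fun k _ => hφ.integrable_mul_pd (hf k).locallyIntegrable_pd k).sub
    ((hφ.integrable_mul hf0).const_mul κ)

lemma integrable_potentialDensity (hβ : ContDiff ℝ 1 β) (hf : ∀ k, HasLocalWeakPD k f (Df k))
    (hf0 : LocallyIntegrable f volume) (hφ : IsC1Test φ) :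
    Integrable (potentialDensity β f Df φ) volume := by
  have hβ' := fun k => continuous_pd hβ k
  have hsq : Continuous fun x => ∑ k, pd k β x * pd k β x :=
    continuous_finsetSum _ fun k _ => (hβ' k).mul (hβ' k)
  refine (hφ.integrable_mul_mul hsq hf0).add (integrable_finsetSum _ fun k _ => ?_)
  simp_rw [mul_add]
  exact (hφ.integrable_mul_mul (hβ' k) (hf k).locallyIntegrable_pd).add
    (hφ.integrable_mul_mul_pd (hβ' k) hf0 k)

lemma helmholtzDensity_add_potentialDensity (κ : ℂ) (x : Pt n) :
    helmholtzDensity κ f Df φ x + potentialDensity β f Df φ x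
      = ∑ k, (Df k x + f x * pd k β x) * (pd k φ x + φ x * pd k β x) - κ * (f x * φ x) := by
  have expand : ∑ k, (Df k x + f x * pd k β x) * (pd k φ x + φ x * pd k β x)
      = ∑ k, Df k x * pd k φ x + ((∑ k, pd k β x * pd k β x) * (f x * φ x)
        + ∑ k, pd k β x * (Df k x * φ x + f x * pd k φ x)) := by
    simp_rw [sum_mul, ← sum_add_distrib]
    exact sum_congr rfl fun k _ => by ring
  rw [expand, helmholtzDensity, potentialDensity]
  ring

theorem integral_weakHelmholtz_eq_zero {κ : ℂ} {q : Pt n → ℂ} (hβ : ContDiff ℝ 1 β)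
    (hc : ContDiff ℝ 1 c) (hcαβ : ∀ k x, pd k c x = c x * (pd k α x + pd k β x))
    (hq : Continuous q) (hcq : ∀ x, c x ^ 2 = -(κ + q x))
    (hf : ∀ k, HasLocalWeakPD k f (Df k)) (hf0 : LocallyIntegrable f volume)
    (hF : ∀ k, HasLocalWeakPD k (F k) (DF k))
    (hH : ∀ j k, HasLocalWeakPD j (H j k) (DH j k)) (hskew : ∀ j k x, H j k x = -H k j x)
    (hdiv : ∀ᵐ x, ∑ k, (DF k x + pd k α x * F k x) + c x * f x = 0)
    (hgrad : ∀ᵐ x, ∀ k, Df k x + f x * pd k β x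
      + ∑ j, (DH j k x - pd j β x * H j k x) + c x * F k x = 0)
    (hφ : IsC1Test φ) :
    (∫ x, helmholtzDensity κ f Df φ x) - (∫ x, q x * (f x * φ x))
      + ∫ x, potentialDensity β f Df φ x = 0 := by
  have hHelm := integrable_helmholtzDensity κ hf hf0 hφ
  have hPot := integrable_potentialDensity hβ hf hf0 hφ
  rw [sub_add_eq_add_sub, ← integral_add' hHelm hPot,
    ← integral_sub' (hHelm.add hPot) (hφ.integrable_mul_mul hq hf0),
    ← integral_twistedHelmholtz_eq_zero hβ hc hcαβ hF hH hskew hdiv hgrad hφ]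
  congr! 2 with x
  simp only [Pi.sub_apply, Pi.add_apply, helmholtzDensity_add_potentialDensity, hcq]
  ring

end TwistedSystem

section ExteriorAlgebra

variable {j : Fin n} {S : Finset (Fin n)}

lemma oneG_singleton (a : Fin n → ℂ) (k : Fin n) : oneG a {k} = a k := by
  simp [oneG, singleton_inj]

lemma oneG_of_card_ne_one (a : Fin n → ℂ) (hS : #S ≠ 1) : oneG a S = 0 :=
  sum_eq_zero fun j _ => if_neg fun h => hS (by rw [h, card_singleton])

lemma dxe_eq_oneG (j : Fin n) : dxe j = oneG (Pi.single j 1) := by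
  funext S
  rw [oneG, sum_eq_single j (fun i _ hi => by simp [hi]) (by simp), Pi.single_eq_same, dxe]

lemma msgn_singleton_left (j : Fin n) (S : Finset (Fin n)) :
    msgn {j} (S.erase j) = (-1) ^ #{i ∈ S | i < j} := by
  rw [msgn, singleton_product, filter_map, card_map]
  congr 2
  ext i
  simp +contextual [ne_of_lt, and_comm]

lemma msgn_singleton_right (S : Finset (Fin n)) (j : Fin n) :
    msgn S {j} = (-1) ^ #{i ∈ S | j < i} := by
  rw [msgn, product_singleton, filter_map, card_map]
  rfl

lemma wedge_oneG (a : Fin n → ℂ) (u : GF n) (S : Finset (Fin n)) :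
    wedge (oneG a) u S
      = ∑ j, if j ∈ S then (-1) ^ #{i ∈ S | i < j} * a j * u (S.erase j) else 0 := by
  simp only [wedge, oneG, mul_sum, sum_mul, mul_ite, ite_mul, mul_zero, zero_mul]
  rw [sum_comm]
  simp [sum_ite_eq', sdiff_singleton_eq_erase, msgn_singleton_left]

lemma vee_oneG (a : Fin n → ℂ) (u : GF n) (S : Finset (Fin n)) :
    vee (oneG a) u S
      = ∑ j, if j ∈ S then 0 else (-1) ^ #{i ∈ S | j < i} * a j * u (insert j S) := by
  simp only [vee, oneG, mul_sum, sum_mul, mul_ite, ite_mul, mul_zero, zero_mul]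
  rw [sum_comm]
  simp [sum_ite_eq', msgn_singleton_right, union_singleton]

lemma wedge_oneG_empty (a : Fin n → ℂ) (u : GF n) : wedge (oneG a) u ∅ = 0 := by
  simp [wedge_oneG]

lemma wedge_oneG_singleton (a : Fin n → ℂ) (u : GF n) (k : Fin n) :
    wedge (oneG a) u {k} = a k * u ∅ := by
  simp [wedge_oneG, filter_singleton]

lemma vee_oneG_empty (a : Fin n → ℂ) (u : GF n) : vee (oneG a) u ∅ = ∑ k, a k * u {k} := by
  simp [vee_oneG]

lemma vee_oneG_univ (a : Fin n → ℂ) (u : GF n) : vee (oneG a) u univ = 0 := by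
  simp [vee_oneG]

/-- The action on graded forms of the covector `dxʲ` through the symbol of `d + δ`, up to the
sign convention of `δ`; its value at `S` is `±` the component at the symmetric difference of `S`
and `{j}`. -/
def clifford (j : Fin n) (u : GF n) : GF n := fun S =>
  (if j ∈ S then 1 else -1) * (-1) ^ #{i ∈ S | i < j} * u (symmDiff S {j})

lemma card_filter_lt_add_card_filter_gt (hj : j ∉ S) :
    #{i ∈ S | i < j} + #{i ∈ S | j < i} = #S := by
  rw [← card_filter_add_card_filter_not (s := S) (· < j)]
  congr 2
  refine filter_congr fun i hi => ?_
  rw [not_lt, le_iff_eq_or_lt, or_iff_right fun h : j = i => hj (h ▸ hi)]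

lemma gd_add_gdel_apply (D : Fin n → GF n) (S : Finset (Fin n)) :
    (gd D + gdel D) S = ∑ j, clifford j (D j) S := by
  simp only [Pi.add_apply, gd, gdel, dxe_eq_oneG, wedge_oneG, vee_oneG, mul_sum,
    ← sum_add_distrib]
  refine sum_congr rfl fun j _ => ?_
  rw [sum_eq_single j (by simp +contextual) (by simp)]
  by_cases hj : j ∈ S
  · have hsdiff : symmDiff S {j} = S.erase j := by
      rw [symmDiff_of_ge (singleton_subset_iff.2 hj), sdiff_singleton_eq_erase]
    simp [clifford, hj, hsdiff]
  · have hinsert : symmDiff S {j} = insert j S := by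
      rw [(disjoint_singleton_right.2 hj).symmDiff_eq_sup, sup_eq_union, union_singleton]
    have hsign : (-1 : ℂ) ^ (#S + 1) * (-1) ^ #{i ∈ S | j < i} = -(-1) ^ #{i ∈ S | i < j} := by
      rw [← card_filter_lt_add_card_filter_gt hj, pow_succ, pow_add, mul_neg_one, neg_mul,
        mul_assoc, ← mul_pow, neg_one_mul, neg_neg, one_pow, mul_one]
    simp [clifford, hj, hinsert, ← mul_assoc, hsign]

lemma ginner_clifford (j : Fin n) (u w : GF n) :
    ginner u (clifford j w) = -ginner (clifford j u) w := by
  have hinv : Function.Involutive fun S : Finset (Fin n) => symmDiff S {j} :=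
    fun S => symmDiff_symmDiff_cancel_right _ S
  rw [ginner, ginner, ← sum_neg_distrib, ← Equiv.sum_comp (hinv.toPerm _)]
  refine sum_congr rfl fun S _ => ?_
  have hfilter : {i ∈ symmDiff S {j} | i < j} = {i ∈ S | i < j} := by
    ext i
    simp +contextual [mem_symmDiff, ne_of_lt, and_comm]
  simp only [hinv.coe_toPerm, clifford, symmDiff_symmDiff_cancel_right, mem_symmDiff,
    mem_singleton, hfilter]
  by_cases hj : j ∈ S <;> simp only [hj, not_true_eq_false, not_false_eq_true, and_false, and_self,
    or_self, or_true, if_true, if_false] <;> ring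

end ExteriorAlgebra

section ThreeDimensions

open scoped Matrix

variable (a b : Fin 3 → ℂ) (u w : GF 3) (D E : Fin 3 → GF 3)

/-- The components of the one-form part of a graded form; with `star2` for the two-form part it
identifies a graded form on `ℝ³` with two scalars and two vectors. -/
def vec1 (u : GF n) : Fin n → ℂ := fun k => u {k}

/-- The `(j, k)` entry of the skew-symmetric matrix of the cross product with a vector `s`, as a
linear function of `s`; the curl of `s` has the components `∑ j, ∂_j (crossMatrix j k s)`. -/
def crossMatrix (j k : Fin 3) : (Fin 3 → ℂ) →ₗ[ℂ] ℂ :=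
  LinearMap.proj k ∘ₗ crossProduct (Pi.single j 1)

lemma crossMatrix_skew (s : Fin 3 → ℂ) (j k : Fin 3) : crossMatrix j k s = -crossMatrix k j s := by
  fin_cases j <;> fin_cases k <;> simp [crossMatrix, cross_apply]

lemma cross_eq_sum_crossMatrix (s : Fin 3 → ℂ) (k : Fin 3) :
    (a ⨯₃ s) k = ∑ j, a j * crossMatrix j k s := by
  fin_cases k <;>
    simp [crossMatrix, cross_apply, Fin.sum_univ_three, sub_eq_add_neg, add_comm]

lemma isLinearMap_star2 : IsLinearMap ℂ star2 :=
  ⟨fun u v => by ext k; fin_cases k <;> simp [star2, add_comm],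
    fun c u => by ext k; fin_cases k <;> simp [star2]⟩

lemma isLinearMap_vec1 : IsLinearMap ℂ (vec1 : GF n → Fin n → ℂ) :=
  ⟨fun _ _ => rfl, fun _ _ => rfl⟩

lemma star2_sum (f : Fin 3 → GF 3) (k : Fin 3) :
    star2 (fun S => ∑ j, f j S) k = ∑ j, star2 (f j) k := by
  fin_cases k <;> simp [star2]

lemma univ_fin_three : (univ : Finset (Fin 3)) = {0, 1, 2} := rfl

lemma star2_proj_two : star2 (proj 2 u) = star2 u := by
  ext k
  fin_cases k <;> simp [star2, proj]

lemma star2_proj_of_ne {l : ℕ} (hl : l ≠ 2) : star2 (proj l u) = 0 := by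
  ext k
  fin_cases k <;> simp [star2, proj, hl.symm]

lemma vec1_proj_one (u : GF n) : vec1 (proj 1 u) = vec1 u := by
  ext k
  simp [vec1, proj]

lemma vec1_proj_of_ne (u : GF n) {l : ℕ} (hl : l ≠ 1) : vec1 (proj l u) = 0 := by
  ext k
  simp [vec1, proj, hl.symm]

lemma vec1_altSign (u : GF n) : vec1 (altSign u) = -vec1 u := by
  ext k
  simp [vec1, altSign]

lemma star2_altSign : star2 (altSign u) = star2 u := by
  ext k
  fin_cases k <;> simp [star2, altSign]

lemma ginner_fin_three : ginner u w
    = u ∅ * w ∅ + ∑ k, u {k} * w {k} + ∑ k, star2 u k * star2 w k + u univ * w univ := by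
  have hsubsets : (univ : Finset (Finset (Fin 3)))
      = {∅, {0}, {1}, {2}, {0, 1}, {0, 2}, {1, 2}, univ} := by decide
  rw [ginner, hsubsets]
  repeat rw [sum_insert (by decide)]
  simp only [sum_singleton, Fin.sum_univ_three, star2, Fin.reduceEq, if_true, if_false]
  ring

lemma star2_wedge_oneG : star2 (wedge (oneG a) u) = a ⨯₃ vec1 u := by
  ext k
  fin_cases k <;>
    simp [wedge_oneG, star2, Fin.sum_univ_three, cross_apply, vec1, filter_insert, filter_singleton,
    erase_insert_of_ne, sub_eq_add_neg]

lemma wedge_oneG_univ : wedge (oneG a) u univ = ∑ k, a k * star2 u k := by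
  simp [wedge_oneG, star2, univ_fin_three, filter_insert, filter_singleton,
    erase_insert_of_ne, pair_comm]

lemma vee_oneG_singleton (k : Fin 3) : vee (oneG a) u {k} = (a ⨯₃ star2 u) k := by
  fin_cases k <;>
    simp [vee_oneG, star2, Fin.sum_univ_three, cross_apply, filter_singleton, sub_eq_add_neg,
    pair_comm (1 : Fin 3) 0, pair_comm (2 : Fin 3), add_comm]

lemma star2_vee_oneG (k : Fin 3) : star2 (vee (oneG a) u) k = a k * u univ := by
  fin_cases k <;>
    simp [vee_oneG, star2, univ_fin_three, filter_insert, filter_singleton,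
    insert_comm (1 : Fin 3) 0, insert_comm (2 : Fin 3) 0, pair_comm (2 : Fin 3) 1]

lemma gd_empty : gd D ∅ = 0 := by
  simp [gd, dxe_eq_oneG, wedge_oneG_empty]

lemma gd_singleton (k : Fin 3) : gd D {k} = D k ∅ := by
  simp [gd, dxe_eq_oneG, wedge_oneG_singleton, Pi.single_apply]

lemma star2_gd (k : Fin 3) : star2 (gd D) k = ∑ j, crossMatrix j k (vec1 (D j)) := by
  unfold gd
  simp only [star2_sum, dxe_eq_oneG, star2_wedge_oneG]
  rfl

lemma gd_univ : gd D univ = ∑ k, star2 (D k) k := by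
  simp [gd, dxe_eq_oneG, wedge_oneG_univ, Pi.single_apply]

lemma gdel_empty : gdel D ∅ = -∑ k, D k {k} := by
  simp [gdel, dxe_eq_oneG, vee_oneG_empty, Pi.single_apply]

lemma gdel_singleton (k : Fin 3) : gdel D {k} = ∑ j, crossMatrix j k (star2 (D j)) := by
  simp [gdel, dxe_eq_oneG, vee_oneG_singleton, crossMatrix]

lemma star2_gdel (k : Fin 3) : star2 (gdel D) k = -D k univ := by
  have hsign : star2 (gdel D) k = -star2 (fun S => ∑ j, vee (dxe j) (D j) S) k := by
    fin_cases k <;> simp [star2, gdel, pow_succ]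
  simp [hsign, star2_sum, dxe_eq_oneG, star2_vee_oneG, Pi.single_apply]

lemma gdel_univ : gdel D univ = 0 := by
  simp [gdel, dxe_eq_oneG, vee_oneG_univ]

lemma oneG_empty : oneG a ∅ = 0 := oneG_of_card_ne_one a (by decide)

lemma oneG_univ : oneG a univ = 0 := oneG_of_card_ne_one a (by decide)

lemma star2_oneG : star2 (oneG a) = 0 := by
  ext k
  fin_cases k <;> simp [star2, oneG_of_card_ne_one]

lemma ginner_oneG : ginner (oneG a) (oneG b) = ∑ k, a k * b k := by
  simp [ginner_fin_three, oneG_empty, oneG_univ, star2_oneG, oneG_singleton]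

lemma ginner_proj_zero_add_proj_three :
    ginner (proj 0 u + proj 3 u) w = u ∅ * w ∅ + u univ * w univ := by
  simp [ginner_fin_three, isLinearMap_star2.map_add, star2_proj_of_ne, proj]

lemma ginner_gdel_add_ginner_gd_proj :
    ginner (gdel fun j => proj 0 (D j) + proj 3 (D j)) (gdel E)
        + ginner (gd fun j => proj 0 (D j) + proj 3 (D j)) (gd E)
      = ∑ k, D k ∅ * E k ∅ + ∑ k, D k univ * E k univ := by
  simp [ginner_fin_three, gd_empty, gd_singleton, star2_gd, gd_univ, gdel_empty, gdel_singleton,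
    star2_gdel, gdel_univ, isLinearMap_star2.map_add, star2_proj_of_ne, isLinearMap_vec1.map_add,
    vec1_proj_of_ne, proj, crossMatrix, add_comm]

section ZerothOrder

variable {a b D} {c : ℂ} {v : GF 3}

lemma P0_empty : P0 (oneG a) (oneG b) c v ∅ = ∑ k, a k * v {k} + c * v ∅ := by
  simp [P0, wedge_oneG_empty, vee_oneG_empty, proj]

lemma P0_singleton (k : Fin 3) : P0 (oneG a) (oneG b) c v {k}
    = v ∅ * b k - (b ⨯₃ star2 v) k + c * v {k} := by
  simp [P0, wedge_oneG_singleton, vee_oneG_singleton, proj, isLinearMap_star2.map_add,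
    star2_proj_two, star2_proj_of_ne, mul_comm]

lemma star2_P0 (k : Fin 3) : star2 (P0 (oneG a) (oneG b) c v) k
    = v univ * a k + (a ⨯₃ vec1 v) k + c * star2 v k := by
  have h0 : vec1 (proj 0 v) = 0 := vec1_proj_of_ne v (by decide)
  have h2 : vec1 (proj 2 v) = 0 := vec1_proj_of_ne v (by decide)
  simp only [P0, isLinearMap_star2.map_add, isLinearMap_star2.map_sub, isLinearMap_star2.map_smul,
    star2_wedge_oneG, star2_vee_oneG, isLinearMap_vec1.map_add, vec1_proj_one, h0, h2, proj,
    map_zero, add_zero, Pi.add_apply, Pi.sub_apply, Pi.smul_apply, card_univ, Fintype.card_fin,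
    OfNat.ofNat_ne_one, Nat.succ_ne_self, if_true, if_false, smul_eq_mul]
  ring

lemma P0_univ : P0 (oneG a) (oneG b) c v univ = ∑ k, b k * star2 v k + c * v univ := by
  simp [P0, wedge_oneG_univ, vee_oneG_univ, isLinearMap_star2.map_add, star2_proj_two,
    star2_proj_of_ne]

lemma Pfull_empty : Pfull (oneG a) (oneG b) c D v ∅
    = ∑ k, (D k {k} + a k * v {k}) + c * v ∅ := by
  simp [Pfull, gd_empty, gdel_empty, P0_empty, altSign, sum_add_distrib, add_assoc]

lemma Pfull_singleton (k : Fin 3) : Pfull (oneG a) (oneG b) c D v {k}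
    = D k ∅ + v ∅ * b k + ∑ j, (crossMatrix j k (star2 (D j)) - b j * crossMatrix j k (star2 v))
      + c * v {k} := by
  simp only [Pfull, Pi.add_apply, gd_singleton, gdel_singleton, P0_singleton, star2_altSign,
    altSign, card_empty, pow_zero, one_mul, cross_eq_sum_crossMatrix, sum_sub_distrib]
  ring

lemma star2_Pfull (k : Fin 3) : star2 (Pfull (oneG a) (oneG b) c D v) k
    = D k univ + v univ * a k
      + ∑ j, (-crossMatrix j k (vec1 (D j)) - a j * -crossMatrix j k (vec1 v))
      + c * star2 v k := by
  have hsign : altSign (D k) univ = -D k univ := by simp [altSign, pow_succ]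
  simp only [Pfull, isLinearMap_star2.map_add, Pi.add_apply, star2_gd, star2_gdel, star2_P0,
    vec1_altSign, hsign, map_neg, mul_neg, cross_eq_sum_crossMatrix, sum_sub_distrib,
    sum_neg_distrib]
  ring

lemma Pfull_univ : Pfull (oneG a) (oneG b) c D v univ
    = ∑ k, (star2 (D k) k + b k * star2 v k) + c * v univ := by
  simp [Pfull, gd_univ, gdel_univ, P0_univ, star2_altSign, sum_add_distrib, add_assoc]

end ZerothOrder

end ThreeDimensions

section WeakToStrong

variable {a : Fin n → Pt n → ℂ} {u v w z : Form n} {Dw : Fin n → Form n}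

lemma HasLocalWeakPD.finsetSum {ι : Type*} {s : Finset ι} {j : Fin n} {f g : ι → Pt n → ℂ}
    (h : ∀ i ∈ s, HasLocalWeakPD j (f i) (g i)) :
    HasLocalWeakPD j (fun x => ∑ i ∈ s, f i x) fun x => ∑ i ∈ s, g i x where
  locallyIntegrable := locallyIntegrable_finsetSum _ fun i hi => (h i hi).locallyIntegrable
  locallyIntegrable_pd := locallyIntegrable_finsetSum _ fun i hi => (h i hi).locallyIntegrable_pd
  hasWeakPD φ hφ := by
    have hφ' := hφ.isC1Test
    simp_rw [sum_mul]
    rw [integral_finsetSum _ fun i hi => hφ'.integrable_mul (h i hi).locallyIntegrable_pd,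
      integral_finsetSum _ fun i hi => hφ'.integrable_mul_pd (h i hi).locallyIntegrable j,
      ← sum_neg_distrib]
    exact sum_congr rfl fun i hi => (h i hi).hasWeakPD φ hφ

lemma HasLocalWeakPD.linearMap {j : Fin n}
    (h : ∀ S, HasLocalWeakPD j (fun x => v x S) fun x => w x S) (L : GF n →ₗ[ℂ] ℂ) :
    HasLocalWeakPD j (fun x => L (v x)) fun x => L (w x) := by
  have hL : ∀ u : GF n, L u = ∑ S, L (fun T => if S = T then 1 else 0) * u S := fun u => by
    simp_rw [L.pi_apply_eq_sum_univ u, smul_eq_mul, mul_comm]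
  simp_rw [hL (v _), hL (w _)]
  exact finsetSum fun S _ => (h S).const_mul _

lemma locallyIntegrable_wedge_oneG (ha : ∀ j, Continuous (a j))
    (hu : ∀ S, LocallyIntegrable (fun x => u x S) volume) (S : Finset (Fin n)) :
    LocallyIntegrable (fun x => wedge (oneG fun j => a j x) (u x) S) volume := by
  simp_rw [wedge_oneG]
  refine locallyIntegrable_finsetSum _ fun j _ => ?_
  split_ifs
  · exact locallyIntegrable_mul_left (continuous_const.mul (ha j)) (hu _)
  · exact locallyIntegrable_zero

lemma locallyIntegrable_vee_oneG (ha : ∀ j, Continuous (a j))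
    (hu : ∀ S, LocallyIntegrable (fun x => u x S) volume) (S : Finset (Fin n)) :
    LocallyIntegrable (fun x => vee (oneG fun j => a j x) (u x) S) volume := by
  simp_rw [vee_oneG]
  refine locallyIntegrable_finsetSum _ fun j _ => ?_
  split_ifs
  · exact locallyIntegrable_zero
  · exact locallyIntegrable_mul_left (continuous_const.mul (ha j)) (hu _)

lemma locallyIntegrable_proj (hu : ∀ S, LocallyIntegrable (fun x => u x S) volume) (l : ℕ)
    (S : Finset (Fin n)) : LocallyIntegrable (fun x => proj l (u x) S) volume := by
  unfold proj
  split_ifs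
  · exact hu S
  · exact locallyIntegrable_zero

lemma locallyIntegrable_P0 {a b : Fin 3 → Pt 3 → ℂ} {c : Pt 3 → ℂ} {v : Form 3}
    (ha : ∀ j, Continuous (a j)) (hb : ∀ j, Continuous (b j)) (hc : Continuous c)
    (hv : ∀ S, LocallyIntegrable (fun x => v x S) volume) (S : Finset (Fin 3)) :
    LocallyIntegrable
      (fun x => P0 (oneG fun j => a j x) (oneG fun j => b j x) (c x) (v x) S) volume := by
  have hproj := locallyIntegrable_proj hv
  have hadd : ∀ l m T, LocallyIntegrable (fun x => (proj l (v x) + proj m (v x)) T) volume :=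
    fun l m T => (hproj l T).add (hproj m T)
  exact ((((locallyIntegrable_wedge_oneG ha (hproj 1) S).add
    (locallyIntegrable_vee_oneG ha (hadd 1 3) S)).add
    (locallyIntegrable_wedge_oneG hb (hadd 0 2) S)).sub
    (locallyIntegrable_vee_oneG hb (hproj 2) S)).add (locallyIntegrable_mul_left hc (hv S))

lemma ginner_gd_add_gdel (u : GF n) (D : Fin n → GF n) :
    ginner u (gd D + gdel D) = -∑ j, ginner (clifford j u) (D j) := by
  have hD : gd D + gdel D = ∑ j, clifford j (D j) := by
    ext S
    rw [gd_add_gdel_apply, Finset.sum_apply]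
  have hsum : ginner u (∑ j, clifford j (D j)) = ∑ j, ginner u (clifford j (D j)) := by
    simp only [ginner, Finset.sum_apply, mul_sum]
    exact sum_comm
  rw [hD, hsum, ← sum_neg_distrib]
  exact sum_congr rfl fun j _ => ginner_clifford j u (D j)

lemma ginner_single (u : GF n) (S : Finset (Fin n)) (z : ℂ) :
    ginner u (Pi.single S z) = u S * z := by
  simp [ginner, Pi.single_apply]

lemma isTest_zero : IsTest (fun _ : Pt n => 0) := ⟨contDiff_const, HasCompactSupport.zero⟩

lemma testForm_single {η : Pt n → ℂ} (hη : IsTest η) (S : Finset (Fin n)) :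
    TestForm fun x => Pi.single S (η x) := fun T => by
  rcases eq_or_ne T S with rfl | hT
  · simpa using hη
  · simpa [hT] using isTest_zero

lemma Dcl_single (η : Pt n → ℂ) (S : Finset (Fin n)) (j : Fin n) (x : Pt n) :
    Dcl (fun y => Pi.single S (η y)) j x = Pi.single S (pd j η x) := by
  ext T
  rcases eq_or_ne T S with rfl | hT
  · simp [Dcl]
  · simp [Dcl, hT, pd_const]

theorem ae_gd_add_gdel_add_eq_zero
    (hw : ∀ j S, HasLocalWeakPD j (fun x => w x S) fun x => Dw j x S)
    (hz : ∀ S, LocallyIntegrable (fun x => z x S) volume)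
    (h : ∀ φ, TestForm φ →
      (∫ x, ginner (w x) ((gd fun j => Dcl φ j x) + gdel fun j => Dcl φ j x))
        + ∫ x, ginner (z x) (φ x) = 0) :
    ∀ᵐ x, (gd fun j => Dw j x) + (gdel fun j => Dw j x) + z x = 0 := by
  have component : ∀ S, ∀ᵐ x, z x S + ∑ j, clifford j (Dw j x) S = 0 := fun S => by
    refine ae_add_weakDiv_eq_zero (F := fun j x => clifford j (w x) S)
      (fun j => (hw j (symmDiff S {j})).const_mul _) (hz S) fun η hη => ?_
    simpa only [Dcl_single, ginner_gd_add_gdel, ginner_single, integral_neg]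
      using h _ (testForm_single hη S)
  filter_upwards [ae_all_iff.2 component] with x hx
  ext S
  rw [Pi.add_apply, gd_add_gdel_apply, add_comm]
  exact hx S

end WeakToStrong

section Coefficients

lemma contDiff_ofReal {f : Pt n → ℝ} (h : ContDiff ℝ 1 f) : ContDiff ℝ 1 fun x => (f x : ℂ) :=
  Complex.ofRealCLM.contDiff.comp h

lemma contDiff_half_log {f : Pt n → ℂ} (h : ContDiff ℝ 1 f) (hf : ∀ x, f x ∈ Complex.slitPlane) :
    ContDiff ℝ 1 fun x => (1 / 2 : ℂ) * Complex.log (f x) :=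
  contDiff_const.mul <| contDiff_iff_contDiffAt.2 fun x =>
    ((Complex.contDiffAt_log (hf x)).restrict_scalars ℝ).comp x h.contDiffAt

lemma exp_half_log_sq {z : ℂ} (hz : z ≠ 0) : Complex.exp (1 / 2 * Complex.log z) ^ 2 = z := by
  rw [← Complex.exp_nat_mul, Nat.cast_ofNat, ← mul_assoc, mul_one_div_cancel two_ne_zero, one_mul,
    Complex.exp_log hz]

end Coefficients

namespace Coeffs

variable (C : Coeffs)

lemma γ_mem_slitPlane (x : Pt 3) : C.γ x ∈ Complex.slitPlane := by
  have hre : (C.γ x).re = C.εf x := by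
    rw [γ, mul_div_assoc, ← Complex.ofReal_div]
    simp
  exact .inl (hre ▸ C.hε₀.trans_le (C.hεge x))

lemma μ_mem_slitPlane (x : Pt 3) : (C.μf x : ℂ) ∈ Complex.slitPlane :=
  Complex.ofReal_mem_slitPlane.2 (C.hμ₀.trans_le (C.hμge x))

lemma contDiff_γ : ContDiff ℝ 1 C.γ :=
  (contDiff_ofReal C.hεC1).add ((contDiff_const.mul (contDiff_ofReal C.hσC1)).div_const _)

lemma contDiff_a : ContDiff ℝ 1 C.a := contDiff_half_log C.contDiff_γ C.γ_mem_slitPlane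

lemma contDiff_b : ContDiff ℝ 1 C.b :=
  contDiff_half_log (contDiff_ofReal C.hμC1) C.μ_mem_slitPlane

lemma contDiff_c0 : ContDiff ℝ 1 C.c0 :=
  (contDiff_const.mul C.contDiff_a.cexp).mul C.contDiff_b.cexp

lemma c0_sq (x : Pt 3) : C.c0 x ^ 2 = -((C.ω : ℂ) ^ 2 * (C.γ x * (C.μf x : ℂ))) := by
  have hγ : C.sg x ^ 2 = C.γ x := exp_half_log_sq (Complex.slitPlane_ne_zero (C.γ_mem_slitPlane x))
  have hμ : C.sm x ^ 2 = C.μf x := exp_half_log_sq (Complex.slitPlane_ne_zero (C.μ_mem_slitPlane x))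
  rw [c0, ← hγ, ← hμ]
  linear_combination ((C.ω : ℂ) ^ 2 * C.sg x ^ 2 * C.sm x ^ 2) * Complex.I_sq

lemma pd_c0 (j : Fin 3) (x : Pt 3) : pd j C.c0 x = C.c0 x * (pd j C.a x + pd j C.b x) := by
  have hsg : ContDiff ℝ 1 fun y => Complex.I * (C.ω : ℂ) * Complex.exp (C.a y) :=
    contDiff_const.mul C.contDiff_a.cexp
  unfold c0 sg sm
  rw [pd_mul hsg C.contDiff_b.cexp, pd_mul contDiff_const C.contDiff_a.cexp, pd_const,
    pd_cexp C.contDiff_a, pd_cexp C.contDiff_b]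
  ring

end Coeffs

section MainTheorem

variable {C : Coeffs} {v : Form 3} {Dv : Fin 3 → Form 3} {η : Pt 3 → ℂ}

theorem ae_Pfull_eq_zero (hv : ∀ j S, HasLocalWeakPD j (fun x => v x S) fun x => Dv j x S)
    (hsol : IsWeakSolP C v) :
    ∀ᵐ x, Pfull (C.da x) (C.db x) (C.c0 x) (fun j => Dv j x) (v x) = 0 :=
  ae_gd_add_gdel_add_eq_zero (w := fun x => altSign (v x))
    (fun j S => (hv j S).const_mul _)
    (locallyIntegrable_P0 (continuous_pd C.contDiff_a) (continuous_pd C.contDiff_b)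
      C.contDiff_c0.continuous fun S => (hv 0 S).locallyIntegrable) hsol

lemma hasLocalWeakPD_star2 {j : Fin 3} {w : Form 3}
    (h : ∀ S, HasLocalWeakPD j (fun x => v x S) fun x => w x S) (k : Fin 3) :
    HasLocalWeakPD j (fun x => star2 (v x) k) fun x => star2 (w x) k :=
  .linearMap h (LinearMap.proj k ∘ₗ isLinearMap_star2.mk')

lemma hasLocalWeakPD_crossMatrix_star2 {j : Fin 3} {w : Form 3}
    (h : ∀ S, HasLocalWeakPD j (fun x => v x S) fun x => w x S) (k : Fin 3) :
    HasLocalWeakPD j (fun x => crossMatrix j k (star2 (v x)))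
      fun x => crossMatrix j k (star2 (w x)) :=
  .linearMap h (crossMatrix j k ∘ₗ isLinearMap_star2.mk')

lemma hasLocalWeakPD_neg_crossMatrix_vec1 {j : Fin 3} {w : Form 3}
    (h : ∀ S, HasLocalWeakPD j (fun x => v x S) fun x => w x S) (k : Fin 3) :
    HasLocalWeakPD j (fun x => -crossMatrix j k (vec1 (v x)))
      fun x => -crossMatrix j k (vec1 (w x)) :=
  .linearMap h (-(crossMatrix j k ∘ₗ isLinearMap_vec1.mk'))

/-- The function `ω²(γμ - ε₀μ₀)` by which the zeroth order coefficient differs from its constant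
reference value `ω²ε₀μ₀`. -/
def contrast (C : Coeffs) : Pt 3 → ℂ := fun x =>
  (C.ω : ℂ) ^ 2 * (C.γ x * (C.μf x : ℂ) - ((C.ε₀ * C.μ₀ : ℝ) : ℂ))

lemma continuous_contrast (C : Coeffs) : Continuous (contrast C) :=
  continuous_const.mul ((C.contDiff_γ.continuous.mul (contDiff_ofReal C.hμC1).continuous).sub
    continuous_const)

lemma c0_sq_eq_neg_add_contrast (C : Coeffs) (x : Pt 3) :
    C.c0 x ^ 2 = -((C.ω : ℂ) ^ 2 * ((C.ε₀ * C.μ₀ : ℝ) : ℂ) + contrast C x) := by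
  rw [C.c0_sq, contrast]
  ring

theorem integral_weakHelmholtz_zeroForm_eq_zero
    (hv : ∀ j S, HasLocalWeakPD j (fun x => v x S) fun x => Dv j x S) (hsol : IsWeakSolP C v)
    (hη : IsC1Test η) :
    (∫ x, helmholtzDensity ((C.ω : ℂ) ^ 2 * ((C.ε₀ * C.μ₀ : ℝ) : ℂ)) (fun x => v x ∅)
        (fun k x => Dv k x ∅) η x)
      - (∫ x, contrast C x * (v x ∅ * η x))
      + ∫ x, potentialDensity C.b (fun x => v x ∅) (fun k x => Dv k x ∅) η x = 0 := by
  have hP := ae_Pfull_eq_zero hv hsol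
  refine integral_weakHelmholtz_eq_zero (α := C.a) C.contDiff_b C.contDiff_c0 C.pd_c0
    (continuous_contrast C) (c0_sq_eq_neg_add_contrast C) (fun k => hv k ∅)
    (hv 0 ∅).locallyIntegrable (fun k => hv k {k})
    (fun j k => hasLocalWeakPD_crossMatrix_star2 (hv j) k)
    (fun j k x => crossMatrix_skew (star2 (v x)) j k) ?_ ?_ hη
  · filter_upwards [hP] with x hx
    exact Pfull_empty.symm.trans (congr_fun hx ∅)
  · filter_upwards [hP] with x hx k
    exact (Pfull_singleton k).symm.trans (congr_fun hx {k})

theorem integral_weakHelmholtz_threeForm_eq_zero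
    (hv : ∀ j S, HasLocalWeakPD j (fun x => v x S) fun x => Dv j x S) (hsol : IsWeakSolP C v)
    (hη : IsC1Test η) :
    (∫ x, helmholtzDensity ((C.ω : ℂ) ^ 2 * ((C.ε₀ * C.μ₀ : ℝ) : ℂ)) (fun x => v x univ)
        (fun k x => Dv k x univ) η x)
      - (∫ x, contrast C x * (v x univ * η x))
      + ∫ x, potentialDensity C.a (fun x => v x univ) (fun k x => Dv k x univ) η x = 0 := by
  have hP := ae_Pfull_eq_zero hv hsol
  have hc : ∀ k x, pd k C.c0 x = C.c0 x * (pd k C.b x + pd k C.a x) := fun k x => by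
    rw [C.pd_c0, add_comm]
  refine integral_weakHelmholtz_eq_zero (α := C.b) C.contDiff_a C.contDiff_c0 hc
    (continuous_contrast C) (c0_sq_eq_neg_add_contrast C) (fun k => hv k univ)
    (hv 0 univ).locallyIntegrable (fun k => hasLocalWeakPD_star2 (hv k) k)
    (fun j k => hasLocalWeakPD_neg_crossMatrix_vec1 (hv j) k)
    (fun j k x => congr_arg Neg.neg (crossMatrix_skew (vec1 (v x)) j k)) ?_ ?_ hη
  · filter_upwards [hP] with x hx
    exact Pfull_univ.symm.trans (congr_fun hx univ)
  · filter_upwards [hP] with x hx k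
    exact (star2_Pfull k).symm.trans ((congr_arg (star2 · k) hx).trans
      (congr_fun isLinearMap_star2.map_zero k))

lemma energy_eq_helmholtzDensity_add (κ : ℂ) (v φ : Form 3) (Dv : Fin 3 → Form 3) (x : Pt 3) :
    ginner (gdel fun j => proj 0 (Dv j x) + proj 3 (Dv j x)) (gdel fun j => Dcl φ j x)
        + ginner (gd fun j => proj 0 (Dv j x) + proj 3 (Dv j x)) (gd fun j => Dcl φ j x)
        - κ * ginner (proj 0 (v x) + proj 3 (v x)) (φ x)
      = helmholtzDensity κ (fun x => v x ∅) (fun k x => Dv k x ∅) (fun x => φ x ∅) x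
        + helmholtzDensity κ (fun x => v x univ) (fun k x => Dv k x univ)
          (fun x => φ x univ) x := by
  rw [ginner_gdel_add_ginner_gd_proj, ginner_proj_zero_add_proj_three]
  simp only [helmholtzDensity, Dcl]
  ring

lemma qtPair_eq (C : Coeffs) (v φ : Form 3) (Dv : Fin 3 → Form 3) :
    qtPair C v Dv φ
      = -(∫ x, (contrast C x * (v x ∅ * φ x ∅) + contrast C x * (v x univ * φ x univ)))
        + ∫ x, (potentialDensity C.b (fun x => v x ∅) (fun k x => Dv k x ∅) (fun x => φ x ∅) x
          + potentialDensity C.a (fun x => v x univ) (fun k x => Dv k x univ)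
            (fun x => φ x univ) x) := by
  rw [qtPair]
  congr 1
  · simp_rw [ginner_proj_zero_add_proj_three, mul_add, contrast]
  · congr! 2 with x
    simp only [potentialDensity, Coeffs.da, Coeffs.db, ginner_oneG, Dcl]
    ring

end MainTheorem

theorem statement2_general (C : Coeffs) (v : Form 3) (Dv : Fin 3 → Form 3)
    (hv : ∀ j S, HasLocalWeakPD j (fun x => v x S) fun x => Dv j x S) (hsol : IsWeakSolP C v)
    (φ : Form 3) (hφ : ∀ S, IsC1Test fun x => φ x S) :
    (∫ x, ginner (gdel fun j => proj 0 (Dv j x) + proj 3 (Dv j x)) (gdel fun j => Dcl φ j x)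
        + ginner (gd fun j => proj 0 (Dv j x) + proj 3 (Dv j x)) (gd fun j => Dcl φ j x)
        - (C.ω : ℂ) ^ 2 * ((C.ε₀ * C.μ₀ : ℝ) : ℂ) * ginner (proj 0 (v x) + proj 3 (v x)) (φ x))
      + qtPair C v Dv φ = 0 := by
  have hHelm := fun S => integrable_helmholtzDensity ((C.ω : ℂ) ^ 2 * ((C.ε₀ * C.μ₀ : ℝ) : ℂ))
    (hv · S) (hv 0 S).locallyIntegrable (hφ S)
  have hContrast := fun S =>
    (hφ S).integrable_mul_mul (continuous_contrast C) (hv 0 S).locallyIntegrable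
  have hPot := fun {β : Pt 3 → ℂ} (hβ : ContDiff ℝ 1 β) S =>
    integrable_potentialDensity hβ (hv · S) (hv 0 S).locallyIntegrable (hφ S)
  simp_rw [energy_eq_helmholtzDensity_add]
  rw [qtPair_eq, integral_add (hHelm ∅) (hHelm univ),
    integral_add (hContrast ∅) (hContrast univ),
    integral_add (hPot C.contDiff_b ∅) (hPot C.contDiff_a univ)]
  linear_combination integral_weakHelmholtz_zeroForm_eq_zero hv hsol (hφ ∅)
    + integral_weakHelmholtz_threeForm_eq_zero hv hsol (hφ univ)

/-- Proposition 2.3.  If `v`, with components in `H¹_loc(ℝ³)`, is a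
weak solution of `P(γ,μ,ω)v = 0` on `ℝ³`, then for every `φ = φ⁰ + φ³` with smooth
compactly supported components,
`∫ [⟨δ(v⁰+v³),δφ⟩ + ⟨d(v⁰+v³),dφ⟩ − ω²ε₀μ₀⟨v⁰+v³,φ⟩] dx + ⟨q̃(γ,μ,ω)(v⁰+v³), φ⟩ = 0`,
the derivatives of `v⁰, v³` being weak derivatives. -/
theorem statement2 (C : Coeffs) (v : Form 3) (Dv : Fin 3 → Form 3)
    (hv : H1locWith v Dv) (hsol : IsWeakSolP C v) :
    ∀ φ : Form 3, TestForm φ →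
      (∀ (x : Pt 3) (S : Finset (Fin 3)), S ≠ ∅ → S ≠ univ → φ x S = 0) →
      (∫ x, ginner (gdel fun j => proj 0 (Dv j x) + proj 3 (Dv j x))
            (gdel fun j => Dcl φ j x)
          + ginner (gd fun j => proj 0 (Dv j x) + proj 3 (Dv j x))
            (gd fun j => Dcl φ j x)
          - (C.ω : ℂ) ^ 2 * ((C.ε₀ * C.μ₀ : ℝ) : ℂ)
            * ginner (proj 0 (v x) + proj 3 (v x)) (φ x))
        + qtPair C v Dv φ = 0 :=
  fun φ hφ _ => statement2_general C v Dv hv.hasLocalWeakPD hsol φ fun S => (hφ S).isC1Test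

end EMPaper
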